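/- Let (S,d) be a geodesic δ-hyperbolic metric space with basepoint e and let x,y,z be three pairwise distinct points of the Gromov boundary ∂S. Then for every K > 0 there exists R > 0 such that for every u ∈ U_R(x), v ∈ U_R(y), w₁,w₂ ∈ U_R(z), and all geodesic segments [u,v] and [w₁,w₂], one has d([u,v],[w₁,w₂]) > K. -/

import Mathlib

/-!
In a geodesic space slim triangles give Gromov's four-point inequality
`min (a·b) (b·c) ≤ (a·c) + C`: some point of `[a,c]` lies within about `(a·c)` of the basepoint,
whereas a point of `[a,b]` is at distance at least `(a·b)` from it.

Let `a` lie on `[u,v]`. Since `(a·u) + (a·v) = d(a,e) + (u·v)`, the four-point inequality for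
`u, a, v` shows that one of `(a·u)`, `(a·v)` is within `C` of `d(a,e)`, hence that
`(a·w) ≤ max (u·w) (v·w) + 2C` for every `w`. If `b` lies on `[w₁,w₂]`, then
`(w₁·w₂) ≤ (b·w₁) ≤ (a·w₁) + d(a,b)`, so `d(a,b)` is at least
`(w₁·w₂) - max (u·w₁) (v·w₁) - 2C`. For `w₁, w₂` close to `z` the first term is large, while
`(u·w₁)` and `(v·w₁)` stay bounded because the limits of `u` and `v` differ from `z`.
-/

/-- A geodesic segment from `u` to `v`: the image of an isometric embedding of
`[0, dist u v]` sending the endpoints to `u` and `v`. -/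
def IsGeodesicSegment {S : Type*} [MetricSpace S] (Γ : Set S) (u v : S) : Prop :=
  ∃ γ : ℝ → S, γ 0 = u ∧ γ (dist u v) = v ∧
    (∀ s ∈ Set.Icc (0 : ℝ) (dist u v), ∀ t ∈ Set.Icc (0 : ℝ) (dist u v),
      dist (γ s) (γ t) = |s - t|) ∧
    Γ = γ '' Set.Icc (0 : ℝ) (dist u v)

/-- A geodesic metric space: every pair of points is joined by a geodesic segment. -/
def GeodesicSpace (S : Type*) [MetricSpace S] : Prop :=
  ∀ u v : S, ∃ Γ : Set S, IsGeodesicSegment Γ u v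

/-- `δ`-hyperbolicity: every geodesic triangle is `δ`-slim. -/
def DeltaHyperbolic (S : Type*) [MetricSpace S] (δ : ℝ) : Prop :=
  ∀ x y z : S, ∀ Γ₁ Γ₂ Γ₃ : Set S,
    IsGeodesicSegment Γ₁ x y → IsGeodesicSegment Γ₂ y z → IsGeodesicSegment Γ₃ z x →
    ∀ p ∈ Γ₁, Metric.infDist p (Γ₂ ∪ Γ₃) ≤ δ

/-- The Gromov product of `x` and `y` with respect to the basepoint `e`. -/
noncomputable def gprod {S : Type*} [MetricSpace S] (e x y : S) : ℝ :=
  (dist x e + dist y e - dist x y) / 2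

/-- A sequence converges to infinity if its pairwise Gromov products tend to infinity. -/
def ConvToInfty {S : Type*} [MetricSpace S] (e : S) (s : ℕ → S) : Prop :=
  Filter.Tendsto (fun p : ℕ × ℕ => gprod e (s p.1) (s p.2)) Filter.atTop Filter.atTop

/-- The type of sequences in `S` converging to infinity. -/
def BSeq (S : Type*) [MetricSpace S] (e : S) := {s : ℕ → S // ConvToInfty e s}

/-- Two sequences converging to infinity are equivalent if their mutual Gromov
products tend to infinity. -/
def bequiv {S : Type*} [MetricSpace S] (e : S) (s t : BSeq S e) : Prop :=
  Filter.Tendsto (fun n => gprod e (s.1 n) (t.1 n)) Filter.atTop Filter.atTop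

/-- The Gromov boundary of `S` with respect to the basepoint `e`. -/
def GBoundary (S : Type*) [MetricSpace S] (e : S) := Quot (bequiv (S := S) e)

/-- A sequence in `S` tends to the boundary point `x`. -/
def TendstoBd {S : Type*} [MetricSpace S] (e : S) (s : ℕ → S) (x : GBoundary S e) : Prop :=
  ∃ h : ConvToInfty e s, Quot.mk _ (⟨s, h⟩ : BSeq S e) = x

/-- The Gromov product of a point `u ∈ S` with a boundary point `x`:
the infimum over sequences tending to `x` of the liminf of Gromov products. -/
noncomputable def gprodSB {S : Type*} [MetricSpace S] (e u : S) (x : GBoundary S e) : EReal :=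
  sInf {r : EReal | ∃ s : ℕ → S, TendstoBd e s x ∧
    r = Filter.liminf (fun n => (gprod e u (s n) : EReal)) Filter.atTop}

/-- The Gromov product of two boundary points. -/
noncomputable def gprodBB {S : Type*} [MetricSpace S] (e : S) (x y : GBoundary S e) : EReal :=
  sInf {r : EReal | ∃ s t : ℕ → S, TendstoBd e s x ∧ TendstoBd e t y ∧
    r = Filter.liminf (fun p : ℕ × ℕ => (gprod e (s p.1) (t p.2) : EReal)) Filter.atTop}

/-- `UK e K x = {s ∈ S | (x·s)_e > K}`. -/
def UK {S : Type*} [MetricSpace S] (e : S) (K : ℝ) (x : GBoundary S e) : Set S :=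
  {u : S | (K : EReal) < gprodSB e u x}

/-- `d'(x,y) = exp (−ζ (x·y)_e)` on the boundary (equal to `0` when the product is `∞`). -/
noncomputable def dExp {S : Type*} [MetricSpace S] (e : S) (ζ : ℝ) (x y : GBoundary S e) : ℝ :=
  if gprodBB e x y = ⊤ then 0 else Real.exp (-ζ * (gprodBB e x y).toReal)

/-- The chain metric `ρ(x,y) = inf Σ d'(s_k, s_{k+1})` over finite chains from `x` to `y`. -/
noncomputable def rhoChain {S : Type*} [MetricSpace S] (e : S) (ζ : ℝ)
    (x y : GBoundary S e) : ℝ :=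
  sInf {r : ℝ | ∃ (n : ℕ) (c : ℕ → GBoundary S e), c 0 = x ∧ c n = y ∧
    r = ∑ k ∈ Finset.range n, dExp e ζ (c k) (c (k + 1))}

/-- `ρ` is a metric. -/
def IsMetricFn {B : Type*} (ρ : B → B → ℝ) : Prop :=
  (∀ x y, 0 ≤ ρ x y) ∧ (∀ x y, ρ x y = 0 ↔ x = y) ∧ (∀ x y, ρ x y = ρ y x) ∧
  ∀ x y z, ρ x z ≤ ρ x y + ρ y z

/-- `ζ` is a suitable visual parameter: `ζ > 0`, the associated chain function `ρ` is a
metric on the boundary, and `d'/2 ≤ ρ ≤ d'`. -/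
def VisualParam {S : Type*} [MetricSpace S] (e : S) (ζ : ℝ) : Prop :=
  0 < ζ ∧ IsMetricFn (rhoChain e ζ) ∧
  ∀ x y : GBoundary S e, dExp e ζ x y / 2 ≤ rhoChain e ζ x y ∧ rhoChain e ζ x y ≤ dExp e ζ x y

/-- The topology on the Gromov boundary induced by the visual metric `ρ`. -/
noncomputable def bdTopology (S : Type*) [MetricSpace S] (e : S) (ζ : ℝ) :
    TopologicalSpace (GBoundary S e) :=
  TopologicalSpace.generateFrom
    {B | ∃ (x : GBoundary S e) (ε : ℝ), 0 < ε ∧ B = {y | rhoChain e ζ x y < ε}}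

section

open Filter

variable {S : Type*} [MetricSpace S] {Γ : Set S} {e a b c p q u v w₁ w₂ : S} {δ C R : ℝ}

namespace IsGeodesicSegment

lemma dist_add_dist (h : IsGeodesicSegment Γ u v) (hp : p ∈ Γ) :
    dist u p + dist p v = dist u v := by
  obtain ⟨γ, hγu, hγv, hγ, rfl⟩ := h
  obtain ⟨t, ht, rfl⟩ := hp
  have hut := hγ 0 ⟨le_rfl, dist_nonneg⟩ t ht
  have htv := hγ t ht (dist u v) ⟨dist_nonneg, le_rfl⟩
  rw [hγu, zero_sub, abs_neg, abs_of_nonneg ht.1] at hut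
  rw [hγv, abs_of_nonpos (sub_nonpos.2 ht.2)] at htv
  linarith

lemma nonempty (h : IsGeodesicSegment Γ u v) : Γ.Nonempty := by
  obtain ⟨γ, -, -, -, rfl⟩ := h
  exact (Set.nonempty_Icc.2 dist_nonneg).image γ

lemma isCompact (h : IsGeodesicSegment Γ u v) : IsCompact Γ := by
  obtain ⟨γ, -, -, hγ, rfl⟩ := h
  have hLip : LipschitzOnWith 1 γ (Set.Icc 0 (dist u v)) :=
    LipschitzOnWith.mk_one fun s hs t ht ↦ (hγ s hs t ht).le
  exact isCompact_Icc.image_of_continuousOn hLip.continuousOn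

lemma exists_dist_left_eq (h : IsGeodesicSegment Γ u v) {t : ℝ}
    (ht : t ∈ Set.Icc 0 (dist u v)) : ∃ p ∈ Γ, dist u p = t := by
  obtain ⟨γ, hγu, -, hγ, rfl⟩ := h
  refine ⟨γ t, Set.mem_image_of_mem γ ht, ?_⟩
  rw [← hγu, hγ 0 ⟨le_rfl, dist_nonneg⟩ t ht, zero_sub, abs_neg, abs_of_nonneg ht.1]

end IsGeodesicSegment

lemma dist_add_dist_le_of_dist_add_dist_eq (hq : dist u q + dist q v = dist u v) (p : S) :
    dist u p + dist p v ≤ dist u v + 2 * dist p q := by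
  have hup := dist_triangle_right u p q
  have hpv := dist_triangle p q v
  linarith

lemma gprod_comm (e a b : S) : gprod e a b = gprod e b a := by
  simp only [gprod, dist_comm a b, add_comm (dist a e)]

lemma gprod_nonneg (e a b : S) : 0 ≤ gprod e a b := by
  unfold gprod
  linarith [dist_triangle_right a b e]

lemma gprod_le_dist_left (e a b : S) : gprod e a b ≤ dist a e := by
  unfold gprod
  linarith [dist_triangle_left b e a]

lemma gprod_le_gprod_add_dist (e a b c : S) : gprod e b c ≤ gprod e a c + dist a b := by
  unfold gprod
  linarith [dist_triangle_left b e a, dist_triangle a b c]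

lemma gprod_le_gprod_of_dist_add_dist_eq (hp : dist u p + dist p v = dist u v) (e : S) :
    gprod e u v ≤ gprod e p u := by
  unfold gprod
  linarith [dist_triangle_left v e p, dist_comm u p]

lemma gprod_le_dist_of_dist_add_dist_eq (hp : dist u p + dist p v = dist u v) (e : S) :
    gprod e u v ≤ dist p e :=
  (gprod_le_gprod_of_dist_add_dist_eq hp e).trans (gprod_le_dist_left e p u)

lemma gprod_add_gprod_of_dist_add_dist_eq (hp : dist u p + dist p v = dist u v) (e : S) :
    gprod e u p + gprod e p v = dist p e + gprod e u v := by
  unfold gprod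
  linarith

/-- Gromov's four-point form of hyperbolicity with respect to the basepoint `e`. It makes sense in
spaces that are not geodesic. -/
def FourPointHyperbolic (e : S) (C : ℝ) : Prop :=
  ∀ a b c : S, min (gprod e a b) (gprod e b c) ≤ gprod e a c + C

namespace DeltaHyperbolic

lemma exists_mem_union_dist_le (h : DeltaHyperbolic S δ) {x y z : S} {Γ₁ Γ₂ Γ₃ : Set S}
    (h₁ : IsGeodesicSegment Γ₁ x y) (h₂ : IsGeodesicSegment Γ₂ y z)
    (h₃ : IsGeodesicSegment Γ₃ z x) (hp : p ∈ Γ₁) : ∃ q ∈ Γ₂ ∪ Γ₃, dist p q ≤ δ := by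
  obtain ⟨q, hq, hpq⟩ := (h₂.isCompact.union h₃.isCompact).exists_infDist_eq_dist
    h₂.nonempty.inl p
  exact ⟨q, hq, hpq ▸ h x y z Γ₁ Γ₂ Γ₃ h₁ h₂ h₃ p hp⟩

lemma exists_mem_dist_le_gprod_add (h : DeltaHyperbolic S δ) (hgeo : GeodesicSpace S)
    (hΓ : IsGeodesicSegment Γ a c) (e : S) : ∃ p ∈ Γ, dist p e ≤ gprod e a c + 2 * δ := by
  -- In a tree, the point at distance `(c·e)_a` from `a` is the projection of `e` to `[a,c]`.
  obtain ⟨p, hp, hap⟩ := hΓ.exists_dist_left_eq (t := gprod a c e)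
    ⟨gprod_nonneg a c e, dist_comm c a ▸ gprod_le_dist_left a c e⟩
  have hpc := hΓ.dist_add_dist hp
  obtain ⟨Γ₂, hΓ₂⟩ := hgeo c e
  obtain ⟨Γ₃, hΓ₃⟩ := hgeo e a
  obtain ⟨q, hq, hpq⟩ := h.exists_mem_union_dist_le hΓ hΓ₂ hΓ₃ hp
  refine ⟨p, hp, ?_⟩
  rcases hq with hq | hq
  · have hcpe := dist_add_dist_le_of_dist_add_dist_eq (hΓ₂.dist_add_dist hq) p
    unfold gprod at *
    linarith [dist_comm c p, dist_comm c a, dist_comm e a]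
  · have hepa := dist_add_dist_le_of_dist_add_dist_eq (hΓ₃.dist_add_dist hq) p
    unfold gprod at *
    linarith [dist_comm e p, dist_comm p a, dist_comm c a, dist_comm e a]

lemma fourPointHyperbolic (h : DeltaHyperbolic S δ) (hgeo : GeodesicSpace S) (e : S) :
    FourPointHyperbolic e (3 * δ) := by
  intro a b c
  obtain ⟨Γ₁, hΓ₁⟩ := hgeo a c
  obtain ⟨Γ₂, hΓ₂⟩ := hgeo c b
  obtain ⟨Γ₃, hΓ₃⟩ := hgeo b a
  obtain ⟨p, hp, hpe⟩ := h.exists_mem_dist_le_gprod_add hgeo hΓ₁ e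
  obtain ⟨q, hq, hpq⟩ := h.exists_mem_union_dist_le hΓ₁ hΓ₂ hΓ₃ hp
  have hqe : dist q e ≤ gprod e a c + 3 * δ := by linarith [dist_triangle_left q e p]
  refine le_trans ?_ hqe
  rcases hq with hq | hq
  · rw [gprod_comm e b c]
    exact min_le_of_right_le (gprod_le_dist_of_dist_add_dist_eq (hΓ₂.dist_add_dist hq) e)
  · rw [gprod_comm e a b]
    exact min_le_of_left_le (gprod_le_dist_of_dist_add_dist_eq (hΓ₃.dist_add_dist hq) e)

end DeltaHyperbolic

lemma eventually_lt_gprod_of_mem_UK {s : BSeq S e} (hu : u ∈ UK e R (Quot.mk _ s)) :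
    ∀ᶠ n in atTop, R < gprod e u (s.1 n) := by
  have hle : gprodSB e u (Quot.mk _ s) ≤ liminf (fun n ↦ (gprod e u (s.1 n) : EReal)) atTop :=
    sInf_le ⟨s.1, ⟨s.2, rfl⟩, rfl⟩
  filter_upwards [eventually_lt_of_lt_liminf (hu.trans_le hle)] with n hn
  exact EReal.coe_lt_coe_iff.1 hn

namespace FourPointHyperbolic

lemma nonneg (h : FourPointHyperbolic e C) : 0 ≤ C := by
  simpa only [min_self, le_add_iff_nonneg_right] using h e e e

lemma dist_le_max_gprod_add (h : FourPointHyperbolic e C)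
    (ha : dist u a + dist a v = dist u v) :
    dist a e ≤ max (gprod e u a) (gprod e a v) + C := by
  linarith [h u a v, gprod_add_gprod_of_dist_add_dist_eq ha e,
    min_add_max (gprod e u a) (gprod e a v)]

lemma gprod_le_max_gprod_add (h : FourPointHyperbolic e C)
    (ha : dist u a + dist a v = dist u v) (w : S) :
    gprod e a w ≤ max (gprod e u w) (gprod e v w) + 2 * C := by
  have haw : gprod e a w ≤ max (gprod e u a) (gprod e a v) + C :=
    (gprod_le_dist_left e a w).trans (h.dist_le_max_gprod_add ha)
  have of_le {u' : S} (hu' : gprod e a w ≤ gprod e u' a + C) :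
      gprod e a w ≤ gprod e u' w + 2 * C := by
    rcases min_le_iff.1 (h u' a w) with hmin | hmin <;> linarith [h.nonneg]
  rcases le_total (gprod e u a) (gprod e a v) with hle | hle
  · rw [max_eq_right hle, gprod_comm e a v] at haw
    linarith [of_le haw, le_max_right (gprod e u w) (gprod e v w)]
  · rw [max_eq_left hle] at haw
    linarith [of_le haw, le_max_left (gprod e u w) (gprod e v w)]

lemma gprod_le_max_gprod_add_dist (h : FourPointHyperbolic e C)
    (ha : dist u a + dist a v = dist u v) (hb : dist w₁ b + dist b w₂ = dist w₁ w₂) :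
    gprod e w₁ w₂ ≤ max (gprod e u w₁) (gprod e v w₁) + 2 * C + dist a b :=
  calc
    gprod e w₁ w₂ ≤ gprod e b w₁ := gprod_le_gprod_of_dist_add_dist_eq hb e
    _ ≤ gprod e a w₁ + dist a b := gprod_le_gprod_add_dist e a b w₁
    _ ≤ max (gprod e u w₁) (gprod e v w₁) + 2 * C + dist a b := by
      gcongr
      exact h.gprod_le_max_gprod_add ha w₁

lemma lt_gprod_add_of_mem_UK (h : FourPointHyperbolic e C) {x : GBoundary S e}
    (hu : u ∈ UK e R x) (hv : v ∈ UK e R x) : R < gprod e u v + C := by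
  obtain ⟨s, rfl⟩ := Quot.exists_rep x
  obtain ⟨n, hun, hvn⟩ :=
    ((eventually_lt_gprod_of_mem_UK hu).and (eventually_lt_gprod_of_mem_UK hv)).exists
  rw [gprod_comm] at hvn
  exact (lt_min hun hvn).trans_le (h u (s.1 n) v)

lemma exists_eventually_gprod_lt (h : FourPointHyperbolic e C) {x y : GBoundary S e}
    (hxy : x ≠ y) : ∃ M, ∀ᶠ R in atTop, ∀ u ∈ UK e R x, ∀ v ∈ UK e R y, gprod e u v < M := by
  obtain ⟨s, rfl⟩ := Quot.exists_rep x
  obtain ⟨t, rfl⟩ := Quot.exists_rep y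
  have hst : ¬ bequiv e s t := fun hst ↦ hxy (Quot.sound hst)
  obtain ⟨M, hM⟩ : ∃ M, ∃ᶠ n in atTop, gprod e (s.1 n) (t.1 n) < M := by
    simpa only [bequiv, tendsto_atTop, not_forall, not_eventually, not_le] using hst
  refine ⟨M + 2 * C, ?_⟩
  filter_upwards [eventually_ge_atTop (M + 2 * C)] with R hR u hu v hv
  obtain ⟨n, hn, hus, hvt⟩ := (hM.and_eventually
    ((eventually_lt_gprod_of_mem_UK hu).and (eventually_lt_gprod_of_mem_UK hv))).exists
  have hut : gprod e u (t.1 n) < M + C := by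
    rw [gprod_comm] at hus
    rcases min_le_iff.1 (h (s.1 n) u (t.1 n)) with hmin | hmin <;> linarith [h.nonneg]
  rcases min_le_iff.1 (h u v (t.1 n)) with hmin | hmin <;> linarith

end FourPointHyperbolic

theorem statement17_general (h : FourPointHyperbolic e C) {x y z : GBoundary S e}
    (hxz : x ≠ z) (hyz : y ≠ z) (K : ℝ) :
    ∀ᶠ R in atTop, ∀ u ∈ UK e R x, ∀ v ∈ UK e R y, ∀ w₁ ∈ UK e R z, ∀ w₂ ∈ UK e R z,
      ∀ a b, dist u a + dist a v = dist u v → dist w₁ b + dist b w₂ = dist w₁ w₂ →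
        K < dist a b := by
  obtain ⟨M₁, hM₁⟩ := h.exists_eventually_gprod_lt hxz
  obtain ⟨M₂, hM₂⟩ := h.exists_eventually_gprod_lt hyz
  filter_upwards [hM₁, hM₂, eventually_ge_atTop (max M₁ M₂ + 3 * C + K)]
    with R hxR hyR hR u hu v hv w₁ hw₁ w₂ hw₂ a b ha hb
  have hmax : max (gprod e u w₁) (gprod e v w₁) < max M₁ M₂ :=
    max_lt_max (hxR u hu w₁ hw₁) (hyR v hv w₁ hw₁)
  have hww : R < gprod e w₁ w₂ + C := h.lt_gprod_add_of_mem_UK hw₁ hw₂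
  linarith [h.gprod_le_max_gprod_add_dist ha hb]

end

/-- For three pairwise distinct boundary points `x, y, z` and every
`K > 0` there is `R > 0` such that geodesics from `U_R(x)` to `U_R(y)` stay at distance
`> K` from geodesics between points of `U_R(z)`. -/
theorem statement17 {S : Type*} [MetricSpace S] (δ : ℝ) (hδ : 0 ≤ δ)
    (hgeo : GeodesicSpace S) (hhyp : DeltaHyperbolic S δ) (e : S)
    (x y z : GBoundary S e) (hxy : x ≠ y) (hyz : y ≠ z) (hxz : x ≠ z) :
    ∀ K : ℝ, 0 < K → ∃ R : ℝ, 0 < R ∧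
      ∀ u v w₁ w₂ : S, u ∈ UK e R x → v ∈ UK e R y → w₁ ∈ UK e R z → w₂ ∈ UK e R z →
        ∀ Γ Δ : Set S, IsGeodesicSegment Γ u v → IsGeodesicSegment Δ w₁ w₂ →
          ∀ a ∈ Γ, ∀ b ∈ Δ, K < dist a b := by
  intro K _
  obtain ⟨R, hR, hR_pos⟩ := ((statement17_general (hhyp.fourPointHyperbolic hgeo e) hxz hyz K).and
    (Filter.eventually_gt_atTop 0)).exists
  exact ⟨R, hR_pos, fun u v w₁ w₂ hu hv hw₁ hw₂ Γ Δ hΓ hΔ a ha b hb ↦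
    hR u hu v hv w₁ hw₁ w₂ hw₂ a b (hΓ.dist_add_dist ha) (hΔ.dist_add_dist hb)⟩
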